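/- Let ω be a trap-free G-orbit of admissible 6-tuples such that no 6-tuple in ω has two of its components q₀,q₁,q₂ equal to 0 (this holds whenever ω represents a 3-manifold of genus two). Then for every f∈ω there exists f′∈ω with ν(f′)>ν(f); consequently ω is an infinite set and the complexity ν is unbounded on ω. -/

import Mathlib

/-!
Common setup: 6-tuples, the coloured graph Γ(f), conditions (I)–(VI),
the maps ψ₁, ψ₂, ψ₃, σ, equivalences, traps, canonical/minimal/root tuples.
-/

namespace GMN

/-- A 6-tuple `(h₀,h₁,h₂;q₀,q₁,q₂)` of integers. -/
structure Tuple where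
  h0 : ℤ
  h1 : ℤ
  h2 : ℤ
  q0 : ℤ
  q1 : ℤ
  q2 : ℤ

namespace Tuple

/-- The `h`-components indexed by `ℤ₃`. -/
def h (f : Tuple) : ZMod 3 → ℤ := fun i => if i = 0 then f.h0 else if i = 1 then f.h1 else f.h2

/-- The `q`-components indexed by `ℤ₃`. -/
def q (f : Tuple) : ZMod 3 → ℤ := fun i => if i = 0 then f.q0 else if i = 1 then f.q1 else f.q2

/-- `2lᵢ = h_{i-1} + hᵢ`. -/
def twol (f : Tuple) (i : ZMod 3) : ℤ := f.h (i - 1) + f.h i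

end Tuple

/-- Condition (I): all `hᵢ` positive. -/
def CondI (f : Tuple) : Prop := ∀ i, 0 < f.h i

/-- Condition (II): all `hᵢ` of the same parity. -/
def CondII (f : Tuple) : Prop := ∀ i j, f.h i % 2 = f.h j % 2

/-- Condition (III): `0 ≤ qᵢ < 2lᵢ`. -/
def CondIII (f : Tuple) : Prop := ∀ i, 0 ≤ f.q i ∧ f.q i < f.twol i

/-- Condition (IV): all `qᵢ` of the same parity. -/
def CondIV (f : Tuple) : Prop := ∀ i j, f.q i % 2 = f.q j % 2

/-- Conditions (I)–(IV) together. -/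
def CondsI_IV (f : Tuple) : Prop := CondI f ∧ CondII f ∧ CondIII f ∧ CondIV f

/-- Condition (V): `hᵢ + qᵢ` odd. -/
def CondV (f : Tuple) : Prop := ∀ i, (f.h i + f.q i) % 2 = 1

/-- The vertex set `V(f) = ⋃ᵢ {i} × ℤ_{2lᵢ}`, with second coordinates as least
nonnegative residues. -/
def Vtx (f : Tuple) : Set (ZMod 3 × ℤ) := {p | 0 ≤ p.2 ∧ p.2 < f.twol p.1}

/-- `ι₀(i,j) = (i, j + (−1)^j)`, second coordinate mod `2lᵢ`. -/
def iota0 (f : Tuple) (p : ZMod 3 × ℤ) : ZMod 3 × ℤ :=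
  (p.1, (if p.2 % 2 = 0 then p.2 + 1 else p.2 - 1) % f.twol p.1)

/-- `ι₁(i,j) = (i, j − (−1)^j)`, second coordinate mod `2lᵢ`. -/
def iota1 (f : Tuple) (p : ZMod 3 × ℤ) : ZMod 3 × ℤ :=
  (p.1, (if p.2 % 2 = 0 then p.2 - 1 else p.2 + 1) % f.twol p.1)

/-- `ι₂(i,j) = (i+1, −j−1)` if `0 ≤ j ≤ hᵢ−1`, and `(i−1, 2lᵢ−j−1)` if `hᵢ ≤ j ≤ 2lᵢ−1`. -/
def iota2 (f : Tuple) (p : ZMod 3 × ℤ) : ZMod 3 × ℤ :=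
  if p.2 < f.h p.1 then (p.1 + 1, (-p.2 - 1) % f.twol (p.1 + 1))
  else (p.1 - 1, (f.twol p.1 - p.2 - 1) % f.twol (p.1 - 1))

/-- `ρ(i,j) = (i, j + qᵢ)`. -/
def rho (f : Tuple) (p : ZMod 3 × ℤ) : ZMod 3 × ℤ :=
  (p.1, (p.2 + f.q p.1) % f.twol p.1)

/-- `ρ⁻¹(i,j) = (i, j − qᵢ)`. -/
def rhoInv (f : Tuple) (p : ZMod 3 × ℤ) : ZMod 3 × ℤ :=
  (p.1, (p.2 - f.q p.1) % f.twol p.1)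

/-- `ι₃ = ρ ∘ ι₂ ∘ ρ⁻¹`. -/
def iota3 (f : Tuple) : ZMod 3 × ℤ → ZMod 3 × ℤ :=
  rho f ∘ iota2 f ∘ rhoInv f

/-- The four involutions of `Γ(f)`, indexed by the colour `c ∈ {0,1,2,3}`. -/
def iota (f : Tuple) : Fin 4 → ZMod 3 × ℤ → ZMod 3 × ℤ
  | 0 => iota0 f
  | 1 => iota1 f
  | 2 => iota2 f
  | 3 => iota3 f

/-- One step along an edge of `Γ(f)` whose colour lies in `S`, within `V(f)`. -/
def Step (f : Tuple) (S : Set (Fin 4)) (a b : ZMod 3 × ℤ) : Prop :=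
  a ∈ Vtx f ∧ b ∈ Vtx f ∧ ∃ c ∈ S, b = iota f c a

/-- The orbit relation on `V(f)` of the subgroup generated by the involutions with
colours in `S` (the `S`-residue relation). -/
def OrbRel (f : Tuple) (S : Set (Fin 4)) : ZMod 3 × ℤ → ZMod 3 × ℤ → Prop :=
  Relation.EqvGen (Step f S)

/-- The subgroup generated by the colours in `S` has exactly three orbits on `V(f)`. -/
def ThreeOrbits (f : Tuple) (S : Set (Fin 4)) : Prop :=
  ∃ a b c, a ∈ Vtx f ∧ b ∈ Vtx f ∧ c ∈ Vtx f ∧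
    ¬ OrbRel f S a b ∧ ¬ OrbRel f S a c ∧ ¬ OrbRel f S b c ∧
    ∀ v ∈ Vtx f, OrbRel f S a v ∨ OrbRel f S b v ∨ OrbRel f S c v

/-- Admissibility: conditions (I)–(IV), (V), and (VI) (three `{2,3}`-residues). -/
def Admissible (f : Tuple) : Prop :=
  CondsI_IV f ∧ CondV f ∧ ThreeOrbits f {2, 3}

/-- `ψ₁(h₀,h₁,h₂;q₀,q₁,q₂) = (h₁,h₂,h₀;q₁,q₂,q₀)`. -/
def psi1 (f : Tuple) : Tuple := ⟨f.h1, f.h2, f.h0, f.q1, f.q2, f.q0⟩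

/-- `ψ₂(h₀,h₁,h₂;q₀,q₁,q₂) = (h₂,h₁,h₀;q₀,q₂,q₁)`. -/
def psi2 (f : Tuple) : Tuple := ⟨f.h2, f.h1, f.h0, f.q0, f.q2, f.q1⟩

/-- `ψ₃(h₀,h₁,h₂;q₀,q₁,q₂) = (h₀,h₁,h₂;−q₀,−q₁,−q₂)`, the `q`-entries reduced to their
least nonnegative residues mod the respective `2lᵢ`. -/
def psi3 (f : Tuple) : Tuple :=
  ⟨f.h0, f.h1, f.h2,
    (-f.q0) % (f.h2 + f.h0), (-f.q1) % (f.h0 + f.h1), (-f.q2) % (f.h1 + f.h2)⟩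

/-- The 2-symmetric transformation `σ`, with the `q′`-entries reduced to their least
nonnegative residues mod the respective `2lᵢ′ = h′_{i−1} + h′ᵢ`. -/
def sigma (f : Tuple) : Tuple :=
  if f.q0 = 0 then f
  else if f.q0 < f.h0 ∧ f.q0 < f.h2 then
    ⟨f.h0 + f.h1 - f.q0, f.q0, f.h2 + f.h1 - f.q0,
      (f.h0 + f.h1 + f.h2 - 2 * f.q0) % ((f.h2 + f.h1 - f.q0) + (f.h0 + f.h1 - f.q0)),
      (f.q0 + f.q1 + f.h1) % ((f.h0 + f.h1 - f.q0) + f.q0),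
      (f.q0 + f.q2 + f.h1) % (f.q0 + (f.h2 + f.h1 - f.q0))⟩
  else if f.h0 < f.q0 ∧ f.h2 < f.q0 then
    ⟨f.q0 + f.h1 - f.h2, f.h0 + f.h2 - f.q0, f.q0 + f.h1 - f.h0,
      f.h1 % ((f.q0 + f.h1 - f.h0) + (f.q0 + f.h1 - f.h2)),
      (f.q0 + f.q1 - f.h2) % ((f.q0 + f.h1 - f.h2) + (f.h0 + f.h2 - f.q0)),
      (f.q0 + f.q2 - f.h0) % ((f.h0 + f.h2 - f.q0) + (f.q0 + f.h1 - f.h0))⟩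
  else if f.q0 < f.h2 then
    ⟨f.h1, f.h0, f.h1 + f.h2 - f.h0,
      (f.h1 + f.h2 - f.q0) % ((f.h1 + f.h2 - f.h0) + f.h1),
      f.q1 % (f.h1 + f.h0),
      (2 * f.q0 + f.q2 + f.h1 - f.h0) % (f.h0 + (f.h1 + f.h2 - f.h0))⟩
  else
    ⟨f.h1 + f.h0 - f.h2, f.h2, f.h1,
      (f.h1 + f.h0 - f.q0) % (f.h1 + (f.h1 + f.h0 - f.h2)),
      (2 * f.q0 + f.q1 + f.h1 - f.h2) % ((f.h1 + f.h0 - f.h2) + f.h2),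
      f.q2 % (f.h2 + f.h1)⟩

/-- The complexity `ν(f) = h₀ + h₁ + h₂`. -/
def nu (f : Tuple) : ℤ := f.h0 + f.h1 + f.h2

/-- `δ(f) = ν(σ(f)) − ν(f)`. -/
def delta (f : Tuple) : ℤ := nu (sigma f) - nu f

/-- One step of the action of a generator of `H` on admissible 6-tuples. -/
def HStep (a b : Tuple) : Prop :=
  Admissible a ∧ Admissible b ∧ (b = psi1 a ∨ b = psi2 a ∨ b = psi3 a)

/-- `H`-equivalence: the orbit relation of `H = ⟨ψ₁,ψ₂,ψ₃⟩` on `ℱ`. -/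
def HEquiv : Tuple → Tuple → Prop := Relation.EqvGen HStep

/-- One step of the action of a generator of `H′` on admissible 6-tuples. -/
def H'Step (a b : Tuple) : Prop :=
  Admissible a ∧ Admissible b ∧ (b = psi2 a ∨ b = psi3 a)

/-- `H′`-equivalence: the orbit relation of `H′ = ⟨ψ₂,ψ₃⟩` on `ℱ`. -/
def H'Equiv : Tuple → Tuple → Prop := Relation.EqvGen H'Step

/-- One step of the action of a generator of `G` on admissible 6-tuples. -/
def GStep (a b : Tuple) : Prop :=
  Admissible a ∧ Admissible b ∧ (b = psi1 a ∨ b = psi2 a ∨ b = psi3 a ∨ b = sigma a)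

/-- `G`-equivalence: the orbit relation of `G = ⟨ψ₁,ψ₂,ψ₃,σ⟩` on `ℱ`. -/
def GEquiv : Tuple → Tuple → Prop := Relation.EqvGen GStep

/-- Membership in the set `{0, r+1, r+2, …, s−1}`. -/
def inT (r s x : ℤ) : Prop := x = 0 ∨ (r < x ∧ x < s)

/-- A trap of type `(r,s)`: `H`-equivalent to an admissible `(r,r,s;q₀,0,q₂)` with
`q₀+k(q₀+q₂), q₂+k(q₀+q₂) ∈ {0,r+1,…,s−1} (mod r+s)` for all `k ≥ 0`. -/
def IsTrapOfType (r s : ℤ) (f : Tuple) : Prop :=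
  ∃ g : Tuple, Admissible g ∧ HEquiv f g ∧
    g.h0 = r ∧ g.h1 = r ∧ g.h2 = s ∧ g.q1 = 0 ∧
    ∀ k : ℕ, inT r s ((g.q0 + (k : ℤ) * (g.q0 + g.q2)) % (r + s)) ∧
             inT r s ((g.q2 + (k : ℤ) * (g.q0 + g.q2)) % (r + s))

/-- A trap: a trap of some type `(r,s)` with `0 < r ≤ s`. -/
def IsTrap (f : Tuple) : Prop := ∃ r s : ℤ, 0 < r ∧ r ≤ s ∧ IsTrapOfType r s f

/-- The canonical representative conditions (a)–(i) (together with admissibility). -/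
def Canonical (f : Tuple) : Prop :=
  Admissible f ∧
  (f.h0 ≤ f.h1 ∧ f.h1 ≤ f.h2) ∧
  (2 * f.q0 ≤ f.h2 + f.h0) ∧
  ((f.q0 = 0 ∨ 2 * f.q0 = f.h2 + f.h0) → 2 * f.q1 ≤ f.h0 + f.h1) ∧
  ((f.q0 = 0 ∨ 2 * f.q0 = f.h2 + f.h0) → (f.q1 = 0 ∨ 2 * f.q1 = f.h0 + f.h1) →
    2 * f.q2 ≤ f.h1 + f.h2) ∧
  (f.h0 = f.h1 → f.q0 ≤ f.q2 ∧ f.q2 ≤ (-f.q0) % (f.h2 + f.h0)) ∧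
  (f.h0 = f.h1 → (f.q2 = f.q0 ∨ f.q2 = (-f.q0) % (f.h2 + f.h0)) → f.q1 ≤ f.h1) ∧
  (f.h1 = f.h2 → f.q0 ≤ f.q1 ∧ f.q1 ≤ (-f.q0) % (f.h2 + f.h0)) ∧
  (f.h1 = f.h2 → (f.q1 = f.q0 ∨ f.q1 = (-f.q0) % (f.h2 + f.h0)) → f.q2 ≤ f.h2) ∧
  (f.h0 = f.h1 ∧ f.h1 = f.h2 → f.q1 ≤ f.q2)

/-- A canonical 6-tuple is minimal if its complexity is minimal in its `G`-orbit. -/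
def Minimal (f : Tuple) : Prop :=
  Canonical f ∧ ∀ g, GEquiv f g → nu f ≤ nu g

/-- A canonical 6-tuple is a root if every `G`-equivalent but not `H`-equivalent
6-tuple has strictly larger complexity. -/
def Root (f : Tuple) : Prop :=
  Canonical f ∧ ∀ g, GEquiv f g → ¬ HEquiv f g → nu f < nu g

/-- A colour-preserving isomorphism between `Γ(f)` and `Γ(f′)`. -/
def CPIso (f f' : Tuple) : Prop :=
  ∃ φ : ZMod 3 × ℤ → ZMod 3 × ℤ, Set.BijOn φ (Vtx f) (Vtx f') ∧
    ∀ c : Fin 4, ∀ v ∈ Vtx f, φ (iota f c v) = iota f' c (φ v)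

/-- The set of admissible 6-tuples, as a type. -/
abbrev AdmTuple := {f : Tuple // Admissible f}


/-! ### The orbits of `⟨ι₂, ι₃⟩` as a quotient of the universal cover of `V(f)` -/

/-- Generating relations, on the unreduced vertices `ℤ₃ × ℤ`, for the orbits of `⟨ι₂, ι₃⟩`. -/
inductive Gen (f : Tuple) : ZMod 3 × ℤ → ZMod 3 × ℤ → Prop
  | period (i : ZMod 3) (j : ℤ) : Gen f (i, j) (i, j + f.twol i)
  | two (i : ZMod 3) (j : ℤ) : 0 ≤ j → j < f.h i → Gen f (i, j) (i + 1, -j - 1)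
  | three (i : ZMod 3) (j : ℤ) : 0 ≤ j → j < f.h i →
      Gen f (i, j + f.q i) (i + 1, -j - 1 + f.q (i + 1))

/-- The set of orbits of `⟨ι₂, ι₃⟩`; it makes sense for unreduced `q`-entries. -/
def Orb (f : Tuple) : Type := Quot (Gen f)

/-- The orbit of an unreduced vertex. -/
def Orb.mk (f : Tuple) (i : ZMod 3) (j : ℤ) : Orb f := Quot.mk _ (i, j)

lemma Orb.mk_add_mul (f : Tuple) (i : ZMod 3) (j k : ℤ) :
    Orb.mk f i (j + k * f.twol i) = Orb.mk f i j := by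
  induction k using Int.induction_on with
  | zero => simp
  | succ n ih =>
    rw [← ih, add_mul, one_mul, ← add_assoc]
    exact (Quot.sound (Gen.period i _)).symm
  | pred n ih =>
    rw [← ih]
    have := Quot.sound (Gen.period (f := f) i (j + (-(n : ℤ) - 1) * f.twol i))
    unfold Orb.mk
    rw [this]
    congr 2
    ring

lemma Orb.mk_congr {f : Tuple} {i : ZMod 3} {x y : ℤ} (k : ℤ) (h : x = y + k * f.twol i) :
    Orb.mk f i x = Orb.mk f i y := by
  rw [h, Orb.mk_add_mul]

lemma Orb.mk_emod (f : Tuple) (i : ZMod 3) (x : ℤ) :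
    Orb.mk f i (x % f.twol i) = Orb.mk f i x :=
  Orb.mk_congr (-(x / f.twol i)) (by have := Int.emod_add_mul_ediv x (f.twol i); linarith)

lemma Orb.two {f : Tuple} {i : ZMod 3} {x y : ℤ} (j : ℤ) (h0 : 0 ≤ j) (h1 : j < f.h i)
    (a b : ℤ) (hx : x = j + a * f.twol i) (hy : y = -j - 1 + b * f.twol (i + 1)) :
    Orb.mk f i x = Orb.mk f (i + 1) y := by
  rw [Orb.mk_congr a hx, Orb.mk_congr b hy]
  exact Quot.sound (Gen.two i j h0 h1)

lemma Orb.three {f : Tuple} {i : ZMod 3} {x y : ℤ} (j : ℤ) (h0 : 0 ≤ j) (h1 : j < f.h i)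
    (a b : ℤ) (hx : x = j + f.q i + a * f.twol i)
    (hy : y = -j - 1 + f.q (i + 1) + b * f.twol (i + 1)) :
    Orb.mk f i x = Orb.mk f (i + 1) y := by
  rw [Orb.mk_congr a hx, Orb.mk_congr b hy]
  exact Quot.sound (Gen.three i j h0 h1)

lemma Orb.mk_surjective {f : Tuple} (o : Orb f) : ∃ i j, Orb.mk f i j = o :=
  Quot.inductionOn o fun p => ⟨p.1, p.2, rfl⟩

/-- The number of orbits of `⟨ι₂, ι₃⟩`. -/
noncomputable def numOrb (f : Tuple) : Cardinal := Cardinal.mk (Orb f)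

lemma numOrb_le {f g : Tuple} (a : ZMod 3 → ℤ → Orb g)
    (hper : ∀ i j, a i (j + f.twol i) = a i j)
    (htwo : ∀ i j, 0 ≤ j → j < f.h i → a i j = a (i + 1) (-j - 1))
    (hthree : ∀ i j, 0 ≤ j → j < f.h i → a i (j + f.q i) = a (i + 1) (-j - 1 + f.q (i + 1)))
    (hsurj : ∀ i j, ∃ i' j', a i' j' = Orb.mk g i j) : numOrb g ≤ numOrb f := by
  refine Cardinal.mk_le_of_surjective (f := Quot.lift (fun p => a p.1 p.2) ?_) ?_
  · rintro _ _ (⟨i, j⟩ | ⟨i, j, h0, h1⟩ | ⟨i, j, h0, h1⟩)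
    · exact (hper i j).symm
    · exact htwo i j h0 h1
    · exact hthree i j h0 h1
  · intro o
    obtain ⟨i, j, rfl⟩ := Orb.mk_surjective o
    obtain ⟨i', j', h⟩ := hsurj i j
    exact ⟨Quot.mk _ (i', j'), h⟩

lemma twol_pos {f : Tuple} (hI : CondI f) (i : ZMod 3) : 0 < f.twol i :=
  add_pos (hI _) (hI _)

lemma orbRel_of_mk_eq {f : Tuple} (hI : CondI f) {p p' : ZMod 3 × ℤ}
    (h : Orb.mk f p.1 p.2 = Orb.mk f p'.1 p'.2) :
    OrbRel f {2, 3} (p.1, p.2 % f.twol p.1) (p'.1, p'.2 % f.twol p'.1) := by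
  have mem : ∀ p : ZMod 3 × ℤ, (p.1, p.2 % f.twol p.1) ∈ Vtx f := fun p =>
    ⟨Int.emod_nonneg _ (twol_pos hI _).ne', Int.emod_lt_of_pos _ (twol_pos hI _)⟩
  have h' : Relation.EqvGen (Gen f) p p' := Quot.eqvGen_exact h
  have h1 : ∀ i j, 0 ≤ j → j < f.h i → j % f.twol i = j := fun i j h0 h1 => by
    have := hI (i - 1)
    exact Int.emod_eq_of_lt h0 (by unfold Tuple.twol; omega)
  induction h' with
  | refl => exact Relation.EqvGen.refl _
  | symm _ _ _ ih => exact (ih (Quot.eqvGen_sound ‹_›)).symm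
  | trans _ _ _ _ _ ih ih' =>
    exact (ih (Quot.eqvGen_sound ‹_›)).trans _ _ _ (ih' (Quot.eqvGen_sound ‹_›))
  | rel x y hxy =>
    cases hxy with
    | period i j =>
      simp only [Int.add_emod_right]
      exact Relation.EqvGen.refl _
    | two i j h0 hj =>
      refine Relation.EqvGen.rel _ _ ⟨mem _, mem (_, _), 2, by simp, ?_⟩
      simp only [iota, iota2, h1 i j h0 hj, hj, if_true]
    | three i j h0 hj =>
      refine Relation.EqvGen.rel _ _ ⟨mem (_, _), mem (_, _), 3, by simp, ?_⟩
      simp [iota, iota3, rho, rhoInv, iota2, h1 i j h0 hj, hj]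

lemma mk_iota2 {f : Tuple} {p : ZMod 3 × ℤ} (hp : p ∈ Vtx f) :
    Orb.mk f (iota2 f p).1 (iota2 f p).2 = Orb.mk f p.1 p.2 ∧
    Orb.mk f (iota2 f p).1 ((iota2 f p).2 + f.q (iota2 f p).1) =
      Orb.mk f p.1 (p.2 + f.q p.1) := by
  obtain ⟨i, j⟩ := p
  obtain ⟨h0, h1⟩ := hp
  have hdiv := fun x k => Int.emod_add_mul_ediv x (f.twol k)
  unfold iota2
  split_ifs with h
  · constructor
    · refine (Orb.two j h0 h 0 (-((-j - 1) / f.twol (i + 1))) (by simp) ?_).symm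
      linarith [hdiv (-j - 1) (i + 1)]
    · refine (Orb.three j h0 h 0 (-((-j - 1) / f.twol (i + 1))) (by simp) ?_).symm
      simp only
      linarith [hdiv (-j - 1) (i + 1)]
  · simp only [not_lt] at h h0 h1
    have h1' : f.twol i - j - 1 < f.h (i - 1) := by unfold Tuple.twol; omega
    have hi : i - 1 + 1 = i := by ring
    simp only
    constructor
    · rw [Orb.mk_emod]
      refine (Orb.two (f.twol i - j - 1) (by omega) h1' 0 1 (by simp) ?_).trans (by rw [hi])
      rw [hi]; ring
    · refine (Orb.three (f.twol i - j - 1) (by omega) h1'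
        (-((f.twol i - j - 1) / f.twol (i - 1))) 1 ?_ ?_).trans (by rw [hi])
      · linarith [hdiv (f.twol i - j - 1) (i - 1)]
      · rw [hi]; ring

lemma mk_eq_of_orbRel {f : Tuple} (hI : CondI f) {p p' : ZMod 3 × ℤ}
    (h : OrbRel f {2, 3} p p') : Orb.mk f p.1 p.2 = Orb.mk f p'.1 p'.2 := by
  induction h with
  | refl => rfl
  | symm _ _ _ ih => exact ih.symm
  | trans _ _ _ _ _ ih ih' => exact ih.trans ih'
  | rel x y hxy =>
    obtain ⟨hx, -, c, hc | hc, rfl⟩ := hxy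
    · subst hc
      exact (mk_iota2 hx).1.symm
    · obtain rfl : c = 3 := hc
      have hv : rhoInv f x ∈ Vtx f :=
        ⟨Int.emod_nonneg _ (twol_pos hI _).ne', Int.emod_lt_of_pos _ (twol_pos hI _)⟩
      simp only [iota, iota3, Function.comp, rho]
      rw [Orb.mk_emod, (mk_iota2 hv).2]
      refine (Orb.mk_congr (-((x.2 - f.q x.1) / f.twol x.1)) ?_).symm
      simp only [rhoInv]
      linarith [Int.emod_add_mul_ediv (x.2 - f.q x.1) (f.twol x.1)]

lemma threeOrbits_iff {f : Tuple} (hI : CondI f) : ThreeOrbits f {2, 3} ↔ numOrb f = 3 := by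
  have hred : ∀ p ∈ Vtx f, (p.1, p.2 % f.twol p.1) = p := fun p hp => by
    rw [Int.emod_eq_of_lt hp.1 hp.2]
  have hiff : ∀ p ∈ Vtx f, ∀ p' ∈ Vtx f,
      (OrbRel f {2, 3} p p' ↔ Orb.mk f p.1 p.2 = Orb.mk f p'.1 p'.2) := fun p hp p' hp' =>
    ⟨mk_eq_of_orbRel hI, fun h => by simpa only [hred p hp, hred p' hp'] using orbRel_of_mk_eq hI h⟩
  have hrep : ∀ o : Orb f, ∃ p ∈ Vtx f, Orb.mk f p.1 p.2 = o := fun o => by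
    obtain ⟨i, j, rfl⟩ := Orb.mk_surjective o
    exact ⟨(i, j % f.twol i), ⟨Int.emod_nonneg _ (twol_pos hI _).ne',
      Int.emod_lt_of_pos _ (twol_pos hI _)⟩, Orb.mk_emod f i j⟩
  have hcard : numOrb f = 3 ↔ ∃ a b c : Orb f, a ≠ b ∧ a ≠ c ∧ b ≠ c ∧
      ∀ o, a = o ∨ b = o ∨ c = o := by
    have h3 : numOrb f = 3 ↔ (Set.univ : Set (Orb f)).ncard = 3 := by
      rw [Set.ncard_univ, numOrb, Nat.card, Cardinal.toNat_eq_iff (by norm_num)]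
      norm_num
    rw [h3, Set.ncard_eq_three]
    refine exists_congr fun a => exists_congr fun b => exists_congr fun c =>
      and_congr_right fun _ => and_congr_right fun _ => and_congr_right fun _ => ?_
    simp [Set.ext_iff, eq_comm]
  rw [hcard]
  constructor
  · rintro ⟨a, b, c, ha, hb, hc, hab, hac, hbc, hall⟩
    refine ⟨_, _, _, mt (hiff a ha b hb).2 hab, mt (hiff a ha c hc).2 hac,
      mt (hiff b hb c hc).2 hbc, fun o => ?_⟩
    obtain ⟨v, hv, rfl⟩ := hrep o
    simpa only [hiff a ha v hv, hiff b hb v hv, hiff c hc v hv] using hall v hv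
  · rintro ⟨a, b, c, hab, hac, hbc, hall⟩
    obtain ⟨a, ha, rfl⟩ := hrep a
    obtain ⟨b, hb, rfl⟩ := hrep b
    obtain ⟨c, hc, rfl⟩ := hrep c
    refine ⟨a, b, c, ha, hb, hc, mt (hiff a ha b hb).1 hab, mt (hiff a ha c hc).1 hac,
      mt (hiff b hb c hc).1 hbc, fun v hv => ?_⟩
    simpa only [hiff a ha v hv, hiff b hb v hv, hiff c hc v hv] using hall (Orb.mk f v.1 v.2)

lemma forall_zmod_three {P : ZMod 3 → Prop} : (∀ i, P i) ↔ P 0 ∧ P 1 ∧ P 2 :=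
  ⟨fun h => ⟨h 0, h 1, h 2⟩, fun h i => by
    fin_cases i
    exacts [h.1, h.2.1, h.2.2]⟩

lemma numOrb_psi1_le (f : Tuple) : numOrb (psi1 f) ≤ numOrb f := by
  have hh : ∀ i, f.h i = (psi1 f).h (i - 1) := forall_zmod_three.2 ⟨rfl, rfl, rfl⟩
  have hq : ∀ i, f.q i = (psi1 f).q (i - 1) := forall_zmod_three.2 ⟨rfl, rfl, rfl⟩
  have h1 : ∀ i : ZMod 3, i + 1 - 1 = i - 1 + 1 := fun i => by ring
  refine numOrb_le (fun i j => Orb.mk _ (i - 1) j) (fun i j => ?_) (fun i j h0 hj => ?_)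
    (fun i j h0 hj => ?_) (fun i j => ⟨i + 1, j, by simp⟩)
  · exact Orb.mk_congr 1 (by simp only [Tuple.twol, hh]; ring)
  · simp only [h1]
    exact Orb.two j h0 (hh i ▸ hj) 0 0 (by ring) (by ring)
  · simp only [hq, h1]
    exact Orb.three j h0 (hh i ▸ hj) 0 0 (by ring) (by ring)

lemma numOrb_psi2_le (f : Tuple) : numOrb (psi2 f) ≤ numOrb f := by
  have hh : ∀ i, f.h i = (psi2 f).h (-(i + 1)) := forall_zmod_three.2 ⟨rfl, rfl, rfl⟩
  have hq : ∀ i, f.q i = (psi2 f).q (-i) := forall_zmod_three.2 ⟨rfl, rfl, rfl⟩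
  have h1 : ∀ i : ZMod 3, -(i + 1) + 1 = -i := fun i => by ring
  refine numOrb_le (fun i j => Orb.mk _ (-i) (-j - 1 + f.q i)) (fun i j => ?_)
    (fun i j h0 hj => ?_) (fun i j h0 hj => ?_) (fun i j => ⟨-i, -j - 1 + f.q (-i), ?_⟩)
  · refine Orb.mk_congr (-1) ?_
    have h2 : -(i - 1 + 1) = -i := by ring
    have h3 : -(i + 1) = -i - 1 := by ring
    simp only [Tuple.twol, hh, h2, h3]
    ring
  · have := Orb.three (f := psi2 f) (x := j + f.q (i + 1)) (y := -j - 1 + f.q i) j h0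
      (hh i ▸ hj) 0 0 (by rw [hq]; ring) (by rw [h1, hq]; ring)
    rw [h1] at this
    rw [← this]
    congr 1
    ring
  · have := Orb.two (f := psi2 f) (x := j) (y := -j - 1) j h0 (hh i ▸ hj) 0 0 (by ring) (by ring)
    rw [h1] at this
    have e1 : -(j + f.q i) - 1 + f.q i = -j - 1 := by ring
    have e2 : -(-j - 1 + f.q (i + 1)) - 1 + f.q (i + 1) = j := by ring
    simp only [e1, e2, this]
  · have e : -(-j - 1 + f.q (-i)) - 1 + f.q (-i) = j := by ring
    simp only [e, neg_neg]

lemma numOrb_le_of_congr {f g : Tuple} (k0 k1 k2 : ℤ) (h0 : g.h0 = f.h0) (h1 : g.h1 = f.h1)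
    (h2 : g.h2 = f.h2) (e0 : f.q0 = g.q0 + k0 * (f.h2 + f.h0))
    (e1 : f.q1 = g.q1 + k1 * (f.h0 + f.h1)) (e2 : f.q2 = g.q2 + k2 * (f.h1 + f.h2)) :
    numOrb g ≤ numOrb f := by
  have hh : ∀ i, g.h i = f.h i := forall_zmod_three.2 ⟨h0, h1, h2⟩
  have ht : ∀ i, g.twol i = f.twol i := fun i => by simp only [Tuple.twol, hh]
  have hq : ∀ i, ∃ k, f.q i = g.q i + k * g.twol i := by
    simp only [ht]
    exact forall_zmod_three.2 ⟨⟨k0, e0⟩, ⟨k1, e1⟩, ⟨k2, e2⟩⟩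
  choose k hk using hq
  refine numOrb_le (fun i j => Orb.mk _ i j) (fun i j => Orb.mk_congr 1 (by rw [ht]; ring))
    (fun i j h0 hj => Orb.two j h0 (by rwa [hh]) 0 0 (by ring) (by ring))
    (fun i j h0 hj => Orb.three j h0 (by rwa [hh]) (k i) (k (i + 1)) (by rw [hk]; ring)
      (by rw [hk]; ring)) (fun i j => ⟨i, j, rfl⟩)

/-- Reduction of the `q`-entries to their least nonnegative residues. -/
def reduce (f : Tuple) : Tuple :=
  ⟨f.h0, f.h1, f.h2, f.q0 % (f.h2 + f.h0), f.q1 % (f.h0 + f.h1), f.q2 % (f.h1 + f.h2)⟩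

lemma numOrb_reduce (f : Tuple) : numOrb (reduce f) = numOrb f := by
  have d := fun x m : ℤ => Int.emod_add_mul_ediv x m
  apply le_antisymm
  · exact numOrb_le_of_congr (f.q0 / (f.h2 + f.h0)) (f.q1 / (f.h0 + f.h1)) (f.q2 / (f.h1 + f.h2))
      rfl rfl rfl (by simp only [reduce]; linarith [d f.q0 (f.h2 + f.h0)])
      (by simp only [reduce]; linarith [d f.q1 (f.h0 + f.h1)])
      (by simp only [reduce]; linarith [d f.q2 (f.h1 + f.h2)])
  · exact numOrb_le_of_congr (-(f.q0 / (f.h2 + f.h0))) (-(f.q1 / (f.h0 + f.h1)))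
      (-(f.q2 / (f.h1 + f.h2))) rfl rfl rfl (by simp only [reduce]; linarith [d f.q0 (f.h2 + f.h0)])
      (by simp only [reduce]; linarith [d f.q1 (f.h0 + f.h1)])
      (by simp only [reduce]; linarith [d f.q2 (f.h1 + f.h2)])

lemma numOrb_psi1 (f : Tuple) : numOrb (psi1 f) = numOrb f :=
  le_antisymm (numOrb_psi1_le f) ((numOrb_psi1_le (psi1 (psi1 f))).trans (numOrb_psi1_le (psi1 f)))

lemma numOrb_psi2 (f : Tuple) : numOrb (psi2 f) = numOrb f :=
  le_antisymm (numOrb_psi2_le f) (numOrb_psi2_le (psi2 f))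

/-! ### Invariance of the number of orbits under `σ` -/

section Arcs

variable {g : Tuple} {x y k : ℤ}

lemma Orb.mk_zero_eq_mk_one (h0 : 0 ≤ k) (h1 : k < g.h0) (a : ℤ)
    (hx : x = -1 - k + a * (g.h0 + g.h1)) : Orb.mk g 0 k = Orb.mk g 1 x :=
  Orb.two (f := g) (i := 0) k h0 h1 0 a (by ring) (by
    rw [show g.twol (0 + 1) = g.h0 + g.h1 from rfl, hx]; ring)

lemma Orb.mk_zero_eq_mk_two (h0 : -g.h2 ≤ k) (h1 : k < 0) (a : ℤ)
    (hx : x = -1 - k + a * (g.h1 + g.h2)) : Orb.mk g 0 k = Orb.mk g 2 x :=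
  (Orb.two (f := g) (i := 2) (-1 - k) (by omega)
    (show -1 - k < g.h2 by omega) a 0
    (by rw [show g.twol 2 = g.h1 + g.h2 from rfl, hx]) (by ring)).symm

lemma Orb.mk_zero_eq_mk_one' (b : ℤ) (h0 : g.q0 ≤ k + b * (g.h2 + g.h0))
    (h1 : k + b * (g.h2 + g.h0) < g.q0 + g.h0) (a : ℤ)
    (hx : x = g.q0 + g.q1 - 1 - (k + b * (g.h2 + g.h0)) + a * (g.h0 + g.h1)) :
    Orb.mk g 0 k = Orb.mk g 1 x :=
  Orb.three (f := g) (i := 0) (k + b * (g.h2 + g.h0) - g.q0) (by omega)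
    (show _ < g.h0 by omega) (-b) a
    (by rw [show g.twol 0 = g.h2 + g.h0 from rfl, show g.q 0 = g.q0 from rfl]; ring)
    (by rw [show g.twol (0 + 1) = g.h0 + g.h1 from rfl, show g.q (0 + 1) = g.q1 from rfl, hx]; ring)

lemma Orb.mk_zero_eq_mk_two' (b : ℤ) (h0 : g.q0 - g.h2 ≤ k + b * (g.h2 + g.h0))
    (h1 : k + b * (g.h2 + g.h0) < g.q0) (a : ℤ)
    (hx : x = g.q0 + g.q2 - 1 - (k + b * (g.h2 + g.h0)) + a * (g.h1 + g.h2)) :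
    Orb.mk g 0 k = Orb.mk g 2 x :=
  (Orb.three (f := g) (i := 2) (g.q0 - 1 - (k + b * (g.h2 + g.h0))) (by omega)
    (show _ < g.h2 by omega) a (-b)
    (by rw [show g.twol 2 = g.h1 + g.h2 from rfl, show g.q 2 = g.q2 from rfl, hx]; ring)
    (by rw [show g.twol (2 + 1) = g.h2 + g.h0 from rfl, show g.q (2 + 1) = g.q0 from rfl]
        ring)).symm

lemma Orb.mk_one_eq_mk_two (j : ℤ) (h0 : 0 ≤ j) (h1 : j < g.h1) (a b : ℤ)
    (hx : x = j + a * (g.h0 + g.h1)) (hy : y = -1 - j + b * (g.h1 + g.h2)) :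
    Orb.mk g 1 x = Orb.mk g 2 y :=
  Orb.two (f := g) (i := 1) j h0 h1 a b hx (by
    rw [show g.twol (1 + 1) = g.h1 + g.h2 from rfl, hy]; ring)

lemma Orb.mk_one_eq_mk_two' (j : ℤ) (h0 : 0 ≤ j) (h1 : j < g.h1) (a b : ℤ)
    (hx : x = j + g.q1 + a * (g.h0 + g.h1)) (hy : y = -1 - j + g.q2 + b * (g.h1 + g.h2)) :
    Orb.mk g 1 x = Orb.mk g 2 y :=
  Orb.three (f := g) (i := 1) j h0 h1 a b hx (by
    rw [show g.twol (1 + 1) = g.h1 + g.h2 from rfl, show g.q (1 + 1) = g.q2 from rfl, hy]; ring)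

end Arcs

/-- A move that keeps the circles `1` and `2` (up to a rotation of the former by `c₁` and a
reflection of the latter) and replaces the circle `0` does not increase the number of orbits, as
long as the arcs joining the circles `1` and `2` (possibly across the circle `0`) are respected. -/
lemma numOrb_le_of_arcs {f g : Tuple} (c₁ c₂ : ℤ) (hf0 : 0 < f.h0) (hf2 : 0 < f.h2)
    (hq0 : 0 ≤ f.q0) (hq0' : f.q0 < f.h2 + f.h0) (hg0 : 0 < g.h0) (hg2 : 0 < g.h2)
    (ht1 : g.h0 + g.h1 = f.h0 + f.h1) (ht2 : g.h1 + g.h2 = f.h1 + f.h2)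
    (hA : ∀ j, 0 ≤ j → j < f.h1 → Orb.mk g 1 (j + c₁) = Orb.mk g 2 (c₂ + j))
    (hB : ∀ j, 0 ≤ j → j < f.h1 → Orb.mk g 1 (j + f.q1 + c₁) = Orb.mk g 2 (c₂ + j - f.q2))
    (hC : ∀ m n, -f.h2 ≤ m → m < f.h0 → -f.h2 ≤ n → n < f.h0 →
      (m = n + f.q0 ∨ m = n + f.q0 - (f.h2 + f.h0)) →
      (if 0 ≤ m then Orb.mk g 1 (c₁ - m - 1) else Orb.mk g 2 (c₂ + m)) =
      (if 0 ≤ n then Orb.mk g 1 (c₁ - n - 1 + f.q1) else Orb.mk g 2 (c₂ + n - f.q2))) :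
    numOrb g ≤ numOrb f := by
  have hL : 0 < f.h2 + f.h0 := by omega
  let b : ℤ → Orb g := fun m => if 0 ≤ m then Orb.mk g 1 (c₁ - m - 1) else Orb.mk g 2 (c₂ + m)
  let a : ZMod 3 → ℤ → Orb g := fun i j =>
    if i = 0 then b ((j + f.h2) % (f.h2 + f.h0) - f.h2)
    else if i = 1 then Orb.mk g 1 (j + c₁) else Orb.mk g 2 (c₂ - 1 - j)
  have a0 : ∀ j, a 0 j = b ((j + f.h2) % (f.h2 + f.h0) - f.h2) := fun j => rfl
  have a1 : ∀ j, a 1 j = Orb.mk g 1 (j + c₁) := fun j => rfl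
  have a2 : ∀ j, a 2 j = Orb.mk g 2 (c₂ - 1 - j) := fun j => rfl
  have a0' : ∀ m, -f.h2 ≤ m → m < f.h0 → a 0 m = b m := fun m h0 h1 => by
    rw [a0, Int.emod_eq_of_lt (by omega) (by omega), add_sub_cancel_right]
  have a0p : ∀ m, a 0 (m + (f.h2 + f.h0)) = a 0 m := fun m => by
    rw [a0, a0, show m + (f.h2 + f.h0) + f.h2 = m + f.h2 + (f.h2 + f.h0) by ring,
      Int.add_emod_right]
  have hC' : ∀ n, -f.h2 ≤ n → n < f.h0 → a 0 (n + f.q0) =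
      if 0 ≤ n then Orb.mk g 1 (c₁ - n - 1 + f.q1) else Orb.mk g 2 (c₂ + n - f.q2) :=
    fun n h0 h1 => by
      by_cases h : n + f.q0 < f.h0
      · rw [a0' _ (by omega) h]
        exact hC _ n (by omega) h h0 h1 (Or.inl rfl)
      · rw [show n + f.q0 = n + f.q0 - (f.h2 + f.h0) + (f.h2 + f.h0) by ring, a0p,
          a0' _ (by omega) (by omega)]
        exact hC _ n (by omega) (by omega) h0 h1 (Or.inr rfl)
  refine numOrb_le a ?_ ?_ ?_ ?_
  · refine forall_zmod_three.2 ⟨a0p, fun j => ?_, fun j => ?_⟩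
    · rw [a1, a1]
      refine Orb.mk_congr 1 ?_
      rw [show g.twol 1 = g.h0 + g.h1 from rfl, show f.twol 1 = f.h0 + f.h1 from rfl, ht1]
      ring
    · rw [a2, a2]
      refine Orb.mk_congr (-1) ?_
      rw [show g.twol 2 = g.h1 + g.h2 from rfl, show f.twol 2 = f.h1 + f.h2 from rfl, ht2]
      ring
  · refine forall_zmod_three.2 ⟨fun j h0 h1 => ?_, fun j h0 h1 => ?_, fun j h0 h1 => ?_⟩
    · change j < f.h0 at h1
      change a 0 j = a 1 _
      rw [a0' j (by omega) h1, a1]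
      simp only [b, h0, if_true]
      congr 1
      ring
    · change a 1 j = a 2 _
      rw [a1, a2, hA j h0 h1]
      congr 1
      ring
    · change j < f.h2 at h1
      change a 2 j = a 0 _
      rw [a0' _ (by omega) (by omega), a2]
      simp only [b, show ¬ 0 ≤ -j - 1 by omega, if_false]
      congr 1
      ring
  · refine forall_zmod_three.2 ⟨fun j h0 h1 => ?_, fun j h0 h1 => ?_, fun j h0 h1 => ?_⟩
    · change j < f.h0 at h1
      change a 0 (j + f.q0) = a 1 (-j - 1 + f.q1)
      rw [hC' j (by omega) h1, a1, if_pos h0]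
      congr 1
      ring
    · change a 1 (j + f.q1) = a 2 (-j - 1 + f.q2)
      rw [a1, a2, hB j h0 h1]
      congr 1
      ring
    · change j < f.h2 at h1
      change a 2 (j + f.q2) = a 0 (-j - 1 + f.q0)
      rw [hC' _ (by omega) (by omega), a2, if_neg (by omega)]
      congr 1
      ring
  · have s1 : ∀ j, ∃ i' j', a i' j' = Orb.mk g 1 j := fun j =>
      ⟨1, j - c₁, by rw [a1, sub_add_cancel]⟩
    have s2 : ∀ j, ∃ i' j', a i' j' = Orb.mk g 2 j := fun j =>
      ⟨2, c₂ - 1 - j, by rw [a2, sub_sub_cancel]⟩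
    refine forall_zmod_three.2 ⟨fun j => ?_, s1, s2⟩
    have hm := Int.emod_nonneg (j + g.h2) (show g.h2 + g.h0 ≠ 0 by omega)
    have hm' := Int.emod_lt_of_pos (j + g.h2) (show 0 < g.h2 + g.h0 by omega)
    have hj : Orb.mk g 0 j = Orb.mk g 0 ((j + g.h2) % (g.h2 + g.h0) - g.h2) := by
      refine Orb.mk_congr ((j + g.h2) / (g.h2 + g.h0)) ?_
      rw [show g.twol 0 = g.h2 + g.h0 from rfl]
      linarith [Int.emod_add_mul_ediv (j + g.h2) (g.h2 + g.h0)]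
    rw [hj]
    obtain ⟨m, hm_eq⟩ : ∃ m, (j + g.h2) % (g.h2 + g.h0) - g.h2 = m := ⟨_, rfl⟩
    rw [hm_eq]
    by_cases h : 0 ≤ m
    · rw [Orb.mk_zero_eq_mk_one h (by omega) 0 rfl]
      exact s1 _
    · rw [Orb.mk_zero_eq_mk_two (by omega) (not_le.1 h) 0 rfl]
      exact s2 _

/-- The unreduced value of `σ` when `0 < q₀ < h₀, h₂`. -/
def sigmaLow (f : Tuple) : Tuple :=
  ⟨f.h0 + f.h1 - f.q0, f.q0, f.h2 + f.h1 - f.q0,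
    f.h0 + f.h1 + f.h2 - 2 * f.q0, f.q0 + f.q1 + f.h1, f.q0 + f.q2 + f.h1⟩

/-- The unreduced value of `σ` when `h₀, h₂ < q₀`. -/
def sigmaHigh (f : Tuple) : Tuple :=
  ⟨f.q0 + f.h1 - f.h2, f.h0 + f.h2 - f.q0, f.q0 + f.h1 - f.h0,
    f.h1, f.q0 + f.q1 - f.h2, f.q0 + f.q2 - f.h0⟩

/-- The unreduced value of `σ` when `h₀ < q₀ < h₂`. -/
def sigmaRight (f : Tuple) : Tuple :=
  ⟨f.h1, f.h0, f.h1 + f.h2 - f.h0,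
    f.h1 + f.h2 - f.q0, f.q1, 2 * f.q0 + f.q2 + f.h1 - f.h0⟩

/-- The unreduced value of `σ` when `h₂ < q₀ < h₀`. -/
def sigmaLeft (f : Tuple) : Tuple :=
  ⟨f.h1 + f.h0 - f.h2, f.h2, f.h1,
    f.h1 + f.h0 - f.q0, 2 * f.q0 + f.q1 + f.h1 - f.h2, f.q2⟩

lemma numOrb_sigmaLow_le {f : Tuple} (p0 : 0 < f.h0) (p1 : 0 < f.h1)
    (p2 : 0 < f.h2) (hq : 0 < f.q0) (hq0 : f.q0 < f.h0) (hq2 : f.q0 < f.h2) :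
    numOrb (sigmaLow f) ≤ numOrb f := by
  refine numOrb_le_of_arcs f.q0 f.q2 p0 p2 hq.le (by omega)
    (by simp only [sigmaLow]; omega) (by simp only [sigmaLow]; omega)
    (by simp only [sigmaLow]; ring) (by simp only [sigmaLow]; ring)
    (fun j h0 h1 => ?_) (fun j h0 h1 => ?_) (fun m n hm hm' hn hn' h => ?_)
  · exact (Orb.mk_zero_eq_mk_one (k := f.h0 + f.h1 - f.q0 - 1 - j)
      (by omega) (by simp only [sigmaLow]; omega) 1 (by simp only [sigmaLow]; ring)).symm.trans
      (Orb.mk_zero_eq_mk_two' 0 (by simp only [sigmaLow]; omega) (by simp only [sigmaLow]; omega)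
        (-1) (by simp only [sigmaLow]; ring))
  · exact (Orb.mk_zero_eq_mk_one' (k := -1 - j) 1 (by simp only [sigmaLow]; omega)
      (by simp only [sigmaLow]; omega) 0 (by simp only [sigmaLow]; ring)).symm.trans
      (Orb.mk_zero_eq_mk_two (by simp only [sigmaLow]; omega) (by omega) 0 (by ring))
  · rcases h with h | h
    · split_ifs with a b b
      · exact (Orb.mk_zero_eq_mk_one (k := n) (by omega) (by simp only [sigmaLow]; omega) 0
          (by omega)).symm.trans (Orb.mk_zero_eq_mk_one' 1
          (by simp only [sigmaLow]; omega) (by simp only [sigmaLow]; omega) 0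
          (by simp only [sigmaLow]; ring))
      · exact Orb.mk_one_eq_mk_two (f.q0 - 1 - m) (by omega) (by simp only [sigmaLow]; omega)
          0 0 (by ring) (by omega)
      · omega
      · exact (Orb.mk_zero_eq_mk_two' (k := -1 - n - f.h1 - f.h2) 1
          (by simp only [sigmaLow]; omega) (by simp only [sigmaLow]; omega) (-1)
          (by simp only [sigmaLow]; rw [h]; ring)).symm.trans (Orb.mk_zero_eq_mk_two
          (by simp only [sigmaLow]; omega) (by omega) (-1)
          (by simp only [sigmaLow]; ring))
    · split_ifs with a b b
      · omega
      · omega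
      · exact (Orb.mk_one_eq_mk_two' (f.h0 - n - 1) (by omega) (by simp only [sigmaLow]; omega)
          (-1) (-1) (by simp only [sigmaLow]; ring) (by simp only [sigmaLow]; rw [h]; ring)).symm
      · omega

lemma numOrb_sigmaHigh_le {f : Tuple} (p0 : 0 < f.h0) (p1 : 0 < f.h1)
    (p2 : 0 < f.h2) (hq : f.q0 < f.h2 + f.h0) (hq0 : f.h0 < f.q0) (hq2 : f.h2 < f.q0) :
    numOrb (sigmaHigh f) ≤ numOrb f := by
  refine numOrb_le_of_arcs f.h0 (f.q0 + f.q2 - f.h0) p0 p2 (by omega) hq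
    (by simp only [sigmaHigh]; omega) (by simp only [sigmaHigh]; omega)
    (by simp only [sigmaHigh]; ring) (by simp only [sigmaHigh]; ring)
    (fun j h0 h1 => ?_) (fun j h0 h1 => ?_) (fun m n hm hm' hn hn' h => ?_)
  · exact (Orb.mk_zero_eq_mk_one (k := f.h1 - 1 - j)
      (by omega) (by simp only [sigmaHigh]; omega) 1 (by simp only [sigmaHigh]; ring)).symm.trans
      (Orb.mk_zero_eq_mk_two' 0 (by simp only [sigmaHigh]; omega) (by simp only [sigmaHigh]; omega)
        0 (by simp only [sigmaHigh]; ring))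
  · exact (Orb.mk_zero_eq_mk_one' (k := -1 - f.q0 + f.h0 - j) 1 (by simp only [sigmaHigh]; omega)
      (by simp only [sigmaHigh]; omega) 1 (by simp only [sigmaHigh]; ring)).symm.trans
      (Orb.mk_zero_eq_mk_two (by simp only [sigmaHigh]; omega) (by omega) 0 (by ring))
  · rcases h with h | h
    · split_ifs with a b b
      · omega
      · exact Orb.mk_one_eq_mk_two (f.h0 - 1 - m) (by omega) (by simp only [sigmaHigh]; omega)
          0 0 (by ring) (by omega)
      · omega
      · omega
    · split_ifs with a b b
      · exact (Orb.mk_zero_eq_mk_one (k := m + f.h1) (by omega) (by simp only [sigmaHigh]; omega)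
          1 (by simp only [sigmaHigh]; ring)).symm.trans (Orb.mk_zero_eq_mk_one' 0
          (by simp only [sigmaHigh]; omega) (by simp only [sigmaHigh]; omega) 0
          (by simp only [sigmaHigh]; rw [h]; ring))
      · omega
      · exact (Orb.mk_one_eq_mk_two' (f.h0 + f.h2 - f.q0 - 1 - n) (by omega)
          (by simp only [sigmaHigh]; omega)
          0 0 (by simp only [sigmaHigh]; ring) (by simp only [sigmaHigh]; rw [h]; ring)).symm
      · exact (Orb.mk_zero_eq_mk_two' (k := -1 - m - f.h2) 0
          (by simp only [sigmaHigh]; omega) (by simp only [sigmaHigh]; omega) (-1)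
          (by simp only [sigmaHigh]; ring)).symm.trans (Orb.mk_zero_eq_mk_two
          (by simp only [sigmaHigh]; omega) (by omega) 0 (by omega))

lemma numOrb_sigmaRight_le {f : Tuple} (p0 : 0 < f.h0) (p1 : 0 < f.h1)
    (p2 : 0 < f.h2) (hq0 : f.h0 < f.q0) (hq2 : f.q0 < f.h2) :
    numOrb (sigmaRight f) ≤ numOrb f := by
  refine numOrb_le_of_arcs f.h0 (f.q0 + f.q2 - f.h0) p0 p2 (by omega) (by omega)
    (by simp only [sigmaRight]; omega) (by simp only [sigmaRight]; omega)
    (by simp only [sigmaRight]; ring) (by simp only [sigmaRight]; ring)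
    (fun j h0 h1 => ?_) (fun j h0 h1 => ?_) (fun m n hm hm' hn hn' h => ?_)
  · exact (Orb.mk_zero_eq_mk_one (k := f.h1 - 1 - j)
      (by omega) (by simp only [sigmaRight]; omega) 1 (by simp only [sigmaRight]; ring)).symm.trans
      (Orb.mk_zero_eq_mk_two' 0 (by simp only [sigmaRight]; omega)
        (by simp only [sigmaRight]; omega) (-1) (by simp only [sigmaRight]; ring))
  · exact (Orb.mk_zero_eq_mk_one' (k := -1 - f.q0 + f.h0 - j) 1 (by simp only [sigmaRight]; omega)
      (by simp only [sigmaRight]; omega) 1 (by simp only [sigmaRight]; ring)).symm.trans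
      (Orb.mk_zero_eq_mk_two (by simp only [sigmaRight]; omega) (by omega) 0 (by ring))
  · rcases h with h | h
    · split_ifs with a b b
      · omega
      · exact Orb.mk_one_eq_mk_two (f.h0 - 1 - m) (by omega) (by simp only [sigmaRight]; omega)
          0 0 (by ring) (by omega)
      · omega
      · exact (Orb.mk_zero_eq_mk_two' (k := f.h0 - m - 1 - f.h1 - f.h2) 1
          (by simp only [sigmaRight]; omega) (by simp only [sigmaRight]; omega) (-1)
          (by simp only [sigmaRight]; ring)).symm.trans (Orb.mk_zero_eq_mk_two
          (by simp only [sigmaRight]; omega) (by omega) (-1)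
          (by simp only [sigmaRight]; rw [h]; ring))
    · split_ifs with a b b
      · omega
      · omega
      · exact (Orb.mk_one_eq_mk_two' (f.h0 - 1 - n) (by omega)
          (by simp only [sigmaRight]; omega)
          0 (-1) (by simp only [sigmaRight]; ring) (by simp only [sigmaRight]; rw [h]; ring)).symm
      · exact (Orb.mk_zero_eq_mk_two' (k := -1 - m - f.h2) 0
          (by simp only [sigmaRight]; omega) (by simp only [sigmaRight]; omega) (-2)
          (by simp only [sigmaRight]; ring)).symm.trans (Orb.mk_zero_eq_mk_two
          (by simp only [sigmaRight]; omega) (by omega) 0 (by omega))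

lemma numOrb_sigmaLeft_le {f : Tuple} (p0 : 0 < f.h0) (p1 : 0 < f.h1)
    (p2 : 0 < f.h2) (hq0 : f.q0 < f.h0) (hq2 : f.h2 < f.q0) :
    numOrb (sigmaLeft f) ≤ numOrb f := by
  refine numOrb_le_of_arcs f.q0 f.q2 p0 p2 (by omega) (by omega)
    (by simp only [sigmaLeft]; omega) (by simp only [sigmaLeft]; omega)
    (by simp only [sigmaLeft]; ring) (by simp only [sigmaLeft]; ring)
    (fun j h0 h1 => ?_) (fun j h0 h1 => ?_) (fun m n hm hm' hn hn' h => ?_)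
  · exact (Orb.mk_zero_eq_mk_one (k := f.h0 + f.h1 - f.q0 - 1 - j)
      (by omega) (by simp only [sigmaLeft]; omega) 1 (by simp only [sigmaLeft]; ring)).symm.trans
      (Orb.mk_zero_eq_mk_two' 0 (by simp only [sigmaLeft]; omega) (by simp only [sigmaLeft]; omega)
        0 (by simp only [sigmaLeft]; ring))
  · exact (Orb.mk_zero_eq_mk_one' (k := -1 - j) 1 (by simp only [sigmaLeft]; omega)
      (by simp only [sigmaLeft]; omega) 0 (by simp only [sigmaLeft]; ring)).symm.trans
      (Orb.mk_zero_eq_mk_two (by simp only [sigmaLeft]; omega) (by omega) 0 (by ring))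
  · rcases h with h | h
    · split_ifs with a b b
      · exact (Orb.mk_zero_eq_mk_one (k := n) (by omega) (by simp only [sigmaLeft]; omega) 0
          (by omega)).symm.trans (Orb.mk_zero_eq_mk_one' 1
          (by simp only [sigmaLeft]; omega) (by simp only [sigmaLeft]; omega) 0
          (by simp only [sigmaLeft]; ring))
      · exact Orb.mk_one_eq_mk_two (f.q0 - 1 - m) (by omega) (by simp only [sigmaLeft]; omega)
          0 0 (by ring) (by omega)
      · omega
      · omega
    · split_ifs with a b b
      · exact (Orb.mk_zero_eq_mk_one (k := m - f.q0 + f.h0 + f.h1) (by omega)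
          (by simp only [sigmaLeft]; omega) 1 (by simp only [sigmaLeft]; ring)).symm.trans
          (Orb.mk_zero_eq_mk_one' 0
          (by simp only [sigmaLeft]; omega) (by simp only [sigmaLeft]; omega) (-1)
          (by simp only [sigmaLeft]; rw [h]; ring))
      · omega
      · exact (Orb.mk_one_eq_mk_two' (-1 - m) (by omega) (by simp only [sigmaLeft]; omega)
          (-1) 0 (by simp only [sigmaLeft]; rw [h]; ring) (by simp only [sigmaLeft]; ring)).symm
      · omega

lemma numOrb_sigmaLow {f : Tuple} (p0 : 0 < f.h0) (p1 : 0 < f.h1)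
    (p2 : 0 < f.h2) (hq : 0 < f.q0) (hq0 : f.q0 < f.h0) (hq2 : f.q0 < f.h2) :
    numOrb (sigmaLow f) = numOrb f := by
  refine le_antisymm (numOrb_sigmaLow_le p0 p1 p2 hq hq0 hq2) ?_
  refine (numOrb_le_of_congr (f := sigmaHigh (sigmaLow f)) 0 1 1 ?_ ?_ ?_ ?_ ?_ ?_).trans
    (numOrb_sigmaHigh_le ?_ ?_ ?_ ?_ ?_ ?_)
  all_goals simp only [sigmaLow, sigmaHigh]
  all_goals omega

lemma numOrb_sigmaHigh {f : Tuple} (p0 : 0 < f.h0) (p1 : 0 < f.h1)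
    (p2 : 0 < f.h2) (hq : f.q0 < f.h2 + f.h0) (hq0 : f.h0 < f.q0) (hq2 : f.h2 < f.q0) :
    numOrb (sigmaHigh f) = numOrb f := by
  refine le_antisymm (numOrb_sigmaHigh_le p0 p1 p2 hq hq0 hq2) ?_
  refine (numOrb_le_of_congr (f := sigmaLow (sigmaHigh f)) 0 1 1 ?_ ?_ ?_ ?_ ?_ ?_).trans
    (numOrb_sigmaLow_le ?_ ?_ ?_ ?_ ?_ ?_)
  all_goals simp only [sigmaLow, sigmaHigh]
  all_goals omega

lemma numOrb_sigmaRight {f : Tuple} (p0 : 0 < f.h0) (p1 : 0 < f.h1)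
    (p2 : 0 < f.h2) (hq0 : f.h0 < f.q0) (hq2 : f.q0 < f.h2) :
    numOrb (sigmaRight f) = numOrb f := by
  refine le_antisymm (numOrb_sigmaRight_le p0 p1 p2 hq0 hq2) ?_
  refine (numOrb_le_of_congr (f := sigmaRight (sigmaRight f)) 0 0 2 ?_ ?_ ?_ ?_ ?_ ?_).trans
    (numOrb_sigmaRight_le ?_ ?_ ?_ ?_ ?_)
  all_goals simp only [sigmaRight]
  all_goals omega

lemma numOrb_sigmaLeft {f : Tuple} (p0 : 0 < f.h0) (p1 : 0 < f.h1)
    (p2 : 0 < f.h2) (hq0 : f.q0 < f.h0) (hq2 : f.h2 < f.q0) :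
    numOrb (sigmaLeft f) = numOrb f := by
  refine le_antisymm (numOrb_sigmaLeft_le p0 p1 p2 hq0 hq2) ?_
  refine (numOrb_le_of_congr (f := sigmaLeft (sigmaLeft f)) 0 2 0 ?_ ?_ ?_ ?_ ?_ ?_).trans
    (numOrb_sigmaLeft_le ?_ ?_ ?_ ?_ ?_)
  all_goals simp only [sigmaLeft]
  all_goals omega

/-! ### Admissibility is preserved -/

lemma admissible_iff (f : Tuple) : Admissible f ↔
    (0 < f.h0 ∧ 0 < f.h1 ∧ 0 < f.h2) ∧
    ((0 ≤ f.q0 ∧ f.q0 < f.h2 + f.h0) ∧ (0 ≤ f.q1 ∧ f.q1 < f.h0 + f.h1) ∧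
      (0 ≤ f.q2 ∧ f.q2 < f.h1 + f.h2)) ∧
    ((f.h0 + f.q0) % 2 = 1 ∧ (f.h0 + f.q1) % 2 = 1 ∧ (f.h0 + f.q2) % 2 = 1 ∧
      (f.h1 + f.q0) % 2 = 1 ∧ (f.h2 + f.q0) % 2 = 1) ∧ numOrb f = 3 := by
  have hI : CondI f ↔ 0 < f.h0 ∧ 0 < f.h1 ∧ 0 < f.h2 := forall_zmod_three
  have hII : CondII f ↔ f.h0 % 2 = f.h1 % 2 ∧ f.h0 % 2 = f.h2 % 2 := by
    refine ⟨fun h => ⟨h 0 1, h 0 2⟩, fun h => ?_⟩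
    have h' : ∀ i, f.h i % 2 = f.h 0 % 2 := forall_zmod_three.2 ⟨rfl, h.1.symm, h.2.symm⟩
    exact fun i j => (h' i).trans (h' j).symm
  have hIV : CondIV f ↔ f.q0 % 2 = f.q1 % 2 ∧ f.q0 % 2 = f.q2 % 2 := by
    refine ⟨fun h => ⟨h 0 1, h 0 2⟩, fun h => ?_⟩
    have h' : ∀ i, f.q i % 2 = f.q 0 % 2 := forall_zmod_three.2 ⟨rfl, h.1.symm, h.2.symm⟩
    exact fun i j => (h' i).trans (h' j).symm
  have hIII : CondIII f ↔ (0 ≤ f.q0 ∧ f.q0 < f.h2 + f.h0) ∧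
      (0 ≤ f.q1 ∧ f.q1 < f.h0 + f.h1) ∧ (0 ≤ f.q2 ∧ f.q2 < f.h1 + f.h2) := forall_zmod_three
  have hV : CondV f ↔ (f.h0 + f.q0) % 2 = 1 ∧ (f.h1 + f.q1) % 2 = 1 ∧ (f.h2 + f.q2) % 2 = 1 :=
    forall_zmod_three
  unfold Admissible CondsI_IV
  constructor
  · rintro ⟨⟨c1, c2, c3, c4⟩, c5, c6⟩
    rw [threeOrbits_iff c1] at c6
    rw [hII] at c2
    rw [hIV] at c4
    rw [hV] at c5
    exact ⟨hI.1 c1, hIII.1 c3, by omega, c6⟩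
  · rintro ⟨c1, c3, c, c6⟩
    rw [threeOrbits_iff (hI.2 c1), hII, hIV, hV]
    exact ⟨⟨hI.2 c1, by omega, hIII.2 c3, by omega⟩, by omega, c6⟩

lemma Admissible.psi1 {f : Tuple} (hf : Admissible f) : Admissible (psi1 f) := by
  rw [admissible_iff, numOrb_psi1]
  rw [admissible_iff] at hf
  simp only [GMN.psi1]
  exact ⟨by omega, by omega, by omega, hf.2.2.2⟩

lemma Admissible.psi2 {f : Tuple} (hf : Admissible f) : Admissible (psi2 f) := by
  rw [admissible_iff, numOrb_psi2]
  rw [admissible_iff] at hf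
  simp only [GMN.psi2]
  exact ⟨by omega, by omega, by omega, hf.2.2.2⟩

lemma admissible_reduce {f : Tuple} (p0 : 0 < f.h0) (p1 : 0 < f.h1) (p2 : 0 < f.h2)
    (e0 : (f.h0 + f.q0) % 2 = 1) (e1 : (f.h0 + f.q1) % 2 = 1) (e2 : (f.h0 + f.q2) % 2 = 1)
    (e3 : (f.h1 + f.q0) % 2 = 1) (e4 : (f.h2 + f.q0) % 2 = 1) (h : numOrb f = 3) :
    Admissible (reduce f) := by
  rw [admissible_iff, numOrb_reduce]
  have r0 := Int.emod_emod_of_dvd f.q0 (show 2 ∣ f.h2 + f.h0 by omega)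
  have r1 := Int.emod_emod_of_dvd f.q1 (show 2 ∣ f.h0 + f.h1 by omega)
  have r2 := Int.emod_emod_of_dvd f.q2 (show 2 ∣ f.h1 + f.h2 by omega)
  refine ⟨⟨p0, p1, p2⟩, ⟨⟨Int.emod_nonneg _ ?_, Int.emod_lt_of_pos _ ?_⟩,
    ⟨Int.emod_nonneg _ ?_, Int.emod_lt_of_pos _ ?_⟩,
    ⟨Int.emod_nonneg _ ?_, Int.emod_lt_of_pos _ ?_⟩⟩, ?_, h⟩
  all_goals try omega
  simp only [reduce]
  omega

lemma sigma_low {f : Tuple} (h0 : f.q0 ≠ 0) (h1 : f.q0 < f.h0) (h2 : f.q0 < f.h2) :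
    sigma f = reduce (sigmaLow f) := by
  rw [sigma, if_neg h0, if_pos ⟨h1, h2⟩]
  rfl

lemma sigma_high {f : Tuple} (h0 : f.q0 ≠ 0) (h1 : f.h0 < f.q0) (h2 : f.h2 < f.q0) :
    sigma f = reduce (sigmaHigh f) := by
  rw [sigma, if_neg h0, if_neg (by omega), if_pos ⟨h1, h2⟩]
  rfl

lemma sigma_right {f : Tuple} (h0 : f.q0 ≠ 0) (h1 : f.h0 < f.q0) (h2 : f.q0 < f.h2) :
    sigma f = reduce (sigmaRight f) := by
  rw [sigma, if_neg h0, if_neg (by omega), if_neg (by omega), if_pos h2]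
  rfl

lemma sigma_left {f : Tuple} (h0 : f.q0 ≠ 0) (h1 : f.q0 < f.h0) (h2 : f.h2 < f.q0) :
    sigma f = reduce (sigmaLeft f) := by
  rw [sigma, if_neg h0, if_neg (by omega), if_neg (by omega), if_neg (by omega)]
  rfl

lemma sigma_cases {f : Tuple} (hf : Admissible f) :
    (f.q0 < f.h0 ∧ f.q0 < f.h2) ∨ (f.h0 < f.q0 ∧ f.h2 < f.q0) ∨
      (f.h0 < f.q0 ∧ f.q0 < f.h2) ∨ (f.q0 < f.h0 ∧ f.h2 < f.q0) := by
  rw [admissible_iff] at hf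
  omega

lemma Admissible.sigma {f : Tuple} (hf : Admissible f) : Admissible (sigma f) := by
  by_cases h0 : f.q0 = 0
  · rwa [GMN.sigma, if_pos h0]
  have hcases := sigma_cases hf
  rw [admissible_iff] at hf
  obtain ⟨⟨p0, p1, p2⟩, hb, hp, hn⟩ := hf
  rcases hcases with ⟨h1, h2⟩ | ⟨h1, h2⟩ | ⟨h1, h2⟩ | ⟨h1, h2⟩
  · rw [sigma_low h0 h1 h2]
    refine admissible_reduce ?_ ?_ ?_ ?_ ?_ ?_ ?_ ?_
      ((numOrb_sigmaLow p0 p1 p2 (by omega) h1 h2).trans hn)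
    all_goals simp only [sigmaLow]; omega
  · rw [sigma_high h0 h1 h2]
    refine admissible_reduce ?_ ?_ ?_ ?_ ?_ ?_ ?_ ?_
      ((numOrb_sigmaHigh p0 p1 p2 (by omega) h1 h2).trans hn)
    all_goals simp only [sigmaHigh]; omega
  · rw [sigma_right h0 h1 h2]
    refine admissible_reduce ?_ ?_ ?_ ?_ ?_ ?_ ?_ ?_
      ((numOrb_sigmaRight p0 p1 p2 h1 h2).trans hn)
    all_goals simp only [sigmaRight]; omega
  · rw [sigma_left h0 h1 h2]
    refine admissible_reduce ?_ ?_ ?_ ?_ ?_ ?_ ?_ ?_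
      ((numOrb_sigmaLeft p0 p1 p2 h1 h2).trans hn)
    all_goals simp only [sigmaLeft]; omega

lemma GEquiv.admissible {f g : Tuple} (hf : Admissible f) (h : GEquiv f g) : Admissible g := by
  have : Admissible f ↔ Admissible g := by
    clear hf
    induction h with
    | refl => rfl
    | symm _ _ _ ih => exact ih.symm
    | trans _ _ _ _ _ ih ih' => exact ih.trans ih'
    | rel x y hxy => exact iff_of_true hxy.1 hxy.2.1
  exact this.1 hf

/-! ### Increasing the complexity -/

/-- A set of admissible tuples that is closed under `ψ₁`, `ψ₂`, `σ`, contains no trap and no tuple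
with two vanishing `q`-entries. -/
structure TrapFree (P : Tuple → Prop) : Prop where
  adm : ∀ f, P f → Admissible f
  psi1 : ∀ f, P f → P (psi1 f)
  psi2 : ∀ f, P f → P (psi2 f)
  sigma : ∀ f, P f → P (sigma f)
  not_trap : ∀ f, P f → ¬ IsTrap f
  not_zero : ∀ f, P f →
    ¬ ((f.q0 = 0 ∧ f.q1 = 0) ∨ (f.q0 = 0 ∧ f.q2 = 0) ∨ (f.q1 = 0 ∧ f.q2 = 0))

namespace TrapFree

variable {P : Tuple → Prop} {f : Tuple}

lemma exists_nu_lt_of_q0_ne_zero (hP : TrapFree P) (hf : P f) (h0 : f.q0 ≠ 0) (hle : f.h0 ≤ f.h1 ∨ f.h2 ≤ f.h1)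
    (hright : f.h0 < f.q0 → f.q0 < f.h2 → f.h0 < f.h1)
    (hleft : f.q0 < f.h0 → f.h2 < f.q0 → f.h2 < f.h1) : ∃ g, P g ∧ nu f < nu g := by
  refine ⟨_, hP.sigma f hf, ?_⟩
  have ha := hP.adm f hf
  have hcases := sigma_cases ha
  rw [admissible_iff] at ha
  rcases hcases with ⟨h1, h2⟩ | ⟨h1, h2⟩ | ⟨h1, h2⟩ | ⟨h1, h2⟩
  · rw [sigma_low h0 h1 h2]
    simp only [nu, reduce, sigmaLow]
    omega
  · rw [sigma_high h0 h1 h2]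
    simp only [nu, reduce, sigmaHigh]
    omega
  · rw [sigma_right h0 h1 h2]
    have := hright h1 h2
    simp only [nu, reduce, sigmaRight]
    omega
  · rw [sigma_left h0 h1 h2]
    have := hleft h1 h2
    simp only [nu, reduce, sigmaLeft]
    omega

/-- The transposition of the first two `h`-entries. -/
lemma swap (hP : TrapFree P) (hf : P f) : P ⟨f.h1, f.h0, f.h2, f.q2, f.q1, f.q0⟩ :=
  hP.psi1 _ (hP.psi2 f hf)

lemma q0_mem_of_not_exists (hP : TrapFree P) (hf : P f) (hn : ¬ ∃ g, P g ∧ nu f < nu g) (h01 : f.h0 = f.h1)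
    (h12 : f.h1 ≤ f.h2) (h1 : f.q1 = 0) : f.h0 < f.q0 ∧ f.q0 < f.h2 := by
  by_contra h
  have hz := hP.not_zero f hf
  exact hn (hP.exists_nu_lt_of_q0_ne_zero hf (by tauto) (Or.inl h01.le) (by omega) (by omega))

/-- The tuples obtained from `(r,r,s;q₀,0,q₂)` by alternating `σ` with the transposition of the
first two `h`-entries. -/
lemma iterate (hP : TrapFree P) (hf : P f) (hn : ¬ ∃ g, P g ∧ nu f < nu g) (h01 : f.h0 = f.h1)
    (h12 : f.h1 ≤ f.h2) (h1 : f.q1 = 0) (k : ℕ) :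
    P ⟨f.h0, f.h0, f.h2, (f.q0 + k * (f.q0 + f.q2)) % (f.h0 + f.h2), 0,
      (f.q2 - k * (f.q0 + f.q2)) % (f.h0 + f.h2)⟩ := by
  have ha := (admissible_iff f).1 (hP.adm f hf)
  induction k with
  | zero =>
    obtain ⟨a0, a1, a2, b0, b1, b2⟩ := f
    simp only at *
    subst h01 h1
    simpa [Int.emod_eq_of_lt ha.2.1.1.1 (by omega : b0 < a0 + a2),
      Int.emod_eq_of_lt ha.2.1.2.2.1 ha.2.1.2.2.2] using hf
  | succ k ih =>
    have hmem := hP.q0_mem_of_not_exists ih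
      (by simpa only [nu, ← h01] using hn) rfl (by simpa only [h01] using h12) rfl
    have hs := hP.swap (hP.sigma _ ih)
    rw [sigma_right (by simp only at hmem ⊢; omega) hmem.1 hmem.2] at hs
    simp only [reduce, sigmaRight] at hs
    have e : f.h0 + f.h2 - f.h0 + f.h0 = f.h0 + f.h2 := by ring
    have e' : f.h0 + (f.h0 + f.h2 - f.h0) = f.h0 + f.h2 := by ring
    rw [e, e'] at hs
    convert hs using 2
    · ring
    · refine Int.emod_eq_emod_iff_emod_sub_eq_zero.2 (Int.emod_eq_zero_of_dvd ?_)
      rw [Int.emod_def, Int.emod_def]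
      refine ⟨2 * ((f.q0 + k * (f.q0 + f.q2)) / (f.h0 + f.h2)) +
        (f.q2 - k * (f.q0 + f.q2)) / (f.h0 + f.h2), ?_⟩
      push_cast
      ring
    · simp
    · refine Int.emod_eq_emod_iff_emod_sub_eq_zero.2 (Int.emod_eq_zero_of_dvd ?_)
      rw [Int.emod_def]
      refine ⟨-1 - (f.q0 + k * (f.q0 + f.q2)) / (f.h0 + f.h2), ?_⟩
      push_cast
      ring

lemma exists_nu_lt_of_sorted (hP : TrapFree P) (hf : P f) (h01 : f.h0 ≤ f.h1) (h12 : f.h1 ≤ f.h2) :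
    ∃ g, P g ∧ nu f < nu g := by
  by_contra hn
  have ha := (admissible_iff f).1 (hP.adm f hf)
  have hz := hP.not_zero f hf
  have h1 : f.q1 = 0 := by
    by_contra h
    obtain ⟨g, hg, hlt⟩ := hP.exists_nu_lt_of_q0_ne_zero (hP.psi1 f hf) h (Or.inl h12)
      (by simp only [GMN.psi1]; omega) (by simp only [GMN.psi1]; omega)
    exact hn ⟨g, hg, by simp only [nu, GMN.psi1] at *; omega⟩
  have h01' : f.h0 = f.h1 := by
    by_contra h
    exact hn (hP.exists_nu_lt_of_q0_ne_zero hf (by tauto) (Or.inl h01) (by omega) (by omega))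
  have key : ∀ g, P g → nu g = nu f → g.h0 = f.h0 → g.h1 = f.h0 → g.h2 = f.h2 → g.q1 = 0 →
      ∀ k : ℕ, inT f.h0 f.h2 ((g.q0 + k * (g.q0 + g.q2)) % (f.h0 + f.h2)) := by
    intro g hg hnu e0 e1 e2 e3 k
    rw [← hnu] at hn
    have hk := hP.iterate hg hn (by omega) (by omega) e3 k
    have := hP.q0_mem_of_not_exists hk (by simp only [nu] at hn hnu ⊢; rwa [e1, ← e0] at hn) rfl
      (by simp only; omega) rfl
    simp only [e0, e2] at this
    exact Or.inr this
  refine hP.not_trap f hf ⟨f.h0, f.h2, ha.1.1, by omega, f, hP.adm f hf,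
    Relation.EqvGen.refl _, rfl, h01'.symm, rfl, h1, fun k => ⟨?_, ?_⟩⟩
  · exact key f hf rfl rfl h01'.symm rfl h1 k
  · have := key _ (hP.swap hf) (by simp only [nu]; ring) h01'.symm rfl rfl h1 k
    rwa [add_comm f.q2 f.q0] at this

lemma exists_nu_lt (hP : TrapFree P) (hf : P f) : ∃ g, P g ∧ nu f < nu g := by
  have hmin : ∀ g, P g → nu g = nu f → g.h0 ≤ g.h1 → g.h0 ≤ g.h2 → ∃ g, P g ∧ nu f < nu g := by
    intro g hg hnu h1 h2
    rw [← hnu]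
    rcases le_total g.h1 g.h2 with h | h
    · exact hP.exists_nu_lt_of_sorted hg h1 h
    · obtain ⟨g', hg', hlt⟩ := hP.exists_nu_lt_of_sorted
        (hP.psi1 _ (hP.psi1 _ (hP.psi2 g hg))) h2 h
      exact ⟨g', hg', by simp only [nu, GMN.psi1, GMN.psi2] at *; omega⟩
  have f1 := hP.psi1 f hf
  have f2 := hP.psi1 _ f1
  rcases le_total f.h0 f.h1 with h01 | h01 <;> rcases le_total f.h0 f.h2 with h02 | h02 <;>
    rcases le_total f.h1 f.h2 with h12 | h12
  all_goals first
    | exact hmin f hf rfl h01 h02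
    | exact hmin _ f1 (by simp only [nu, GMN.psi1]; ring) h12 h01
    | exact hmin _ f2 (by simp only [nu, GMN.psi1]; ring) h02 h12
    | exact hmin f hf rfl (by omega) (by omega)

end TrapFree

/-- a trap-free `G`-orbit in which no 6-tuple has two vanishing
`q`-components contains, above each of its elements, elements of strictly larger
complexity; hence it is infinite and of unbounded complexity. -/
theorem stmt_16 (f₀ : Tuple) (hf₀ : Admissible f₀)
    (htrapfree : ∀ g : Tuple, GEquiv f₀ g → ¬ IsTrap g)
    (hq : ∀ g : Tuple, GEquiv f₀ g →
      ¬ ((g.q0 = 0 ∧ g.q1 = 0) ∨ (g.q0 = 0 ∧ g.q2 = 0) ∨ (g.q1 = 0 ∧ g.q2 = 0))) :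
    (∀ f : Tuple, GEquiv f₀ f → ∃ f' : Tuple, GEquiv f₀ f' ∧ nu f < nu f') ∧
    {g : Tuple | GEquiv f₀ g}.Infinite ∧
    (∀ N : ℤ, ∃ g : Tuple, GEquiv f₀ g ∧ N < nu g) := by
  have hP : TrapFree (GEquiv f₀) :=
    { adm := fun f hf => hf.admissible hf₀
      psi1 := fun f hf => hf.trans _ _ _ (.rel _ _
        ⟨hf.admissible hf₀, (hf.admissible hf₀).psi1, Or.inl rfl⟩)
      psi2 := fun f hf => hf.trans _ _ _ (.rel _ _
        ⟨hf.admissible hf₀, (hf.admissible hf₀).psi2, Or.inr (Or.inl rfl)⟩)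
      sigma := fun f hf => hf.trans _ _ _ (.rel _ _
        ⟨hf.admissible hf₀, (hf.admissible hf₀).sigma, Or.inr (Or.inr (Or.inr rfl))⟩)
      not_trap := htrapfree
      not_zero := hq }
  have hinc : ∀ f, GEquiv f₀ f → ∃ f', GEquiv f₀ f' ∧ nu f < nu f' := fun f hf =>
    hP.exists_nu_lt hf
  have hrefl : GEquiv f₀ f₀ := .refl _
  have hgrow : ∀ n : ℕ, ∃ g, GEquiv f₀ g ∧ nu f₀ + n ≤ nu g := by
    intro n
    induction n with
    | zero => exact ⟨f₀, hrefl, by simp⟩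
    | succ n ih =>
      obtain ⟨g, hg, hle⟩ := ih
      obtain ⟨g', hg', hlt⟩ := hinc g hg
      exact ⟨g', hg', by push_cast; omega⟩
  refine ⟨hinc, fun hfin => ?_, fun N => ?_⟩
  · obtain ⟨g, hg, hmax⟩ := Set.exists_max_image _ nu hfin ⟨f₀, hrefl⟩
    obtain ⟨g', hg', hlt⟩ := hinc g hg
    exact (hmax g' hg').not_gt hlt
  · obtain ⟨g, hg, hle⟩ := hgrow (N - nu f₀ + 1).toNat
    exact ⟨g, hg, by omega⟩

end GMN
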